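/- Let G be a 3-edge-connected cubic graph. For any two distinct edges of G incident with the same vertex, there exists a peripheral cycle of G containing both of them. -/

import Mathlib

open scoped Classical

/-- A multigraph with an orientation: each edge `e` has a source `src e` and a target `tgt e`.
Loops and parallel edges are allowed. -/
structure Multigraph (V E : Type) where
  src : E → V
  tgt : E → V

namespace Multigraph

variable {V E : Type}

/-- `u` and `v` are joined by some edge satisfying the predicate `P`. -/
def adjVia (G : Multigraph V E) (P : E → Prop) (u v : V) : Prop :=
  ∃ e, P e ∧ ((G.src e = u ∧ G.tgt e = v) ∨ (G.src e = v ∧ G.tgt e = u))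

/-- `v` is reachable from `u` using only edges satisfying `P`. -/
def Reaches (G : Multigraph V E) (P : E → Prop) : V → V → Prop :=
  Relation.ReflTransGen (G.adjVia P)

/-- The graph is connected when only edges satisfying `P` are kept (all edges deleted
whose predicate fails, all vertices kept). -/
def ConnectedVia (G : Multigraph V E) (P : E → Prop) : Prop :=
  Nonempty V ∧ ∀ u v : V, G.Reaches P u v

def Connected (G : Multigraph V E) : Prop :=
  G.ConnectedVia fun _ => True

/-- `G` is `k`-edge-connected: it is connected and has no edge cut of size less than `k`;
equivalently, deleting any set of fewer than `k` edges leaves it connected. -/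
def EdgeConnected (G : Multigraph V E) (k : ℕ) : Prop :=
  ∀ S : Set E, S.ncard < k → G.ConnectedVia fun e => e ∉ S

/-- The degree of a vertex (loops counted twice). -/
noncomputable def degree (G : Multigraph V E) (v : V) : ℕ :=
  {e | G.src e = v}.ncard + {e | G.tgt e = v}.ncard

/-- Every vertex has degree exactly 3. -/
def Cubic (G : Multigraph V E) : Prop :=
  ∀ v : V, G.degree v = 3

/-- `φ : E → Γ` is a flow: at every vertex, the sum over outgoing edges equals the
sum over incoming edges. -/
def IsFlow [Fintype E] {Γ : Type} [AddCommGroup Γ] (G : Multigraph V E) (φ : E → Γ) : Prop :=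
  ∀ v : V, (∑ e : E, if G.src e = v then φ e else 0) = ∑ e : E, if G.tgt e = v then φ e else 0

/-- The vertex `v` is an endpoint of some edge of `C`. -/
def touches (G : Multigraph V E) (C : Set E) (v : V) : Prop :=
  ∃ e ∈ C, G.src e = v ∨ G.tgt e = v

/-- An edge set `C` is (the edge set of) a cycle: it is nonempty, every vertex it touches
has degree exactly 2 in it, and it is connected. -/
def IsCycle (G : Multigraph V E) (C : Set E) : Prop :=
  C.Nonempty ∧
  (∀ v : V, G.touches C v →
    ({e ∈ C | G.src e = v}.ncard + {e ∈ C | G.tgt e = v}.ncard = 2)) ∧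
  (∀ u v : V, G.touches C u → G.touches C v → G.Reaches (· ∈ C) u v)

/-- `R` is `k`-closed: every cycle with at least one edge outside `R` has at least
`k+1` edges outside `R`. -/
def Closed (G : Multigraph V E) (k : ℕ) (R : Set E) : Prop :=
  ∀ C : Set E, G.IsCycle C → (C \ R).Nonempty → k + 1 ≤ (C \ R).ncard

/-- The `k`-closure `⟨S⟩ₖ` of `S` : the minimal `k`-closed set containing `S`
(the family of `k`-closed sets is closed under intersections). -/
def kClosure (G : Multigraph V E) (k : ℕ) (S : Set E) : Set E :=
  ⋂₀ {R : Set E | S ⊆ R ∧ G.Closed k R}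

/-- `S` is a `k`-base: its `k`-closure is the whole edge set. -/
def IsBase (G : Multigraph V E) (k : ℕ) (S : Set E) : Prop :=
  G.kClosure k S = Set.univ

/-- An edge set `S` is peripheral if `G − S` is connected. -/
def Peripheral (G : Multigraph V E) (S : Set E) : Prop :=
  G.ConnectedVia fun e => e ∉ S

/-- The spanning subgraph `(V, F)` is a forest, i.e. contains no cycle. -/
def IsForest (G : Multigraph V E) (F : Set E) : Prop :=
  ∀ C : Set E, G.IsCycle C → ¬ C ⊆ F

/-- `vs`, `es` describe a path: distinct vertices `vs 0, …, vs n` and distinct edges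
`es 0, …, es (n-1)` where `es i` joins `vs i` and `vs (i+1)`. -/
def IsPath (G : Multigraph V E) {n : ℕ} (vs : Fin (n + 1) → V) (es : Fin n → E) : Prop :=
  Function.Injective vs ∧ Function.Injective es ∧
  ∀ i : Fin n,
    (G.src (es i) = vs i.castSucc ∧ G.tgt (es i) = vs i.succ) ∨
    (G.src (es i) = vs i.succ ∧ G.tgt (es i) = vs i.castSucc)

/-- The edge `e` has `y` as one endpoint and its other endpoint in `X`,
i.e. `e ∈ E(y, X)`. -/
def joins (G : Multigraph V E) (e : E) (y : V) (X : Set V) : Prop :=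
  (G.src e = y ∧ G.tgt e ∈ X) ∨ (G.tgt e = y ∧ G.src e ∈ X)

/-- `W` is the vertex set of a connected component of `G − X`. -/
def IsComponent (G : Multigraph V E) (X W : Set V) : Prop :=
  W.Nonempty ∧ Disjoint W X ∧
  (∀ u ∈ W, ∀ v : V, v ∉ X → G.adjVia (fun _ => True) u v → v ∈ W) ∧
  (∀ u ∈ W, ∀ v ∈ W, G.Reaches (fun e => G.src e ∉ X ∧ G.tgt e ∉ X) u v)

/-- The subgraph induced on `W`, with only those of its edges satisfying `P` kept,
is connected. -/
def ConnectedOn (G : Multigraph V E) (W : Set V) (P : E → Prop) : Prop :=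
  ∀ u ∈ W, ∀ v ∈ W, G.Reaches (fun e => P e ∧ G.src e ∈ W ∧ G.tgt e ∈ W) u v

/-- The subgraph induced on `W` is `k`-edge-connected. -/
def EdgeConnectedOn (G : Multigraph V E) (W : Set V) (k : ℕ) : Prop :=
  ∀ S : Set E, S.ncard < k → G.ConnectedOn W fun e => e ∉ S

/-- Some cycle lies entirely inside the vertex set `X`. -/
def HasCycleIn (G : Multigraph V E) (X : Set V) : Prop :=
  ∃ C : Set E, G.IsCycle C ∧ ∀ e ∈ C, G.src e ∈ X ∧ G.tgt e ∈ X

/-- The edge cut `E(X, V \ X)`. -/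
def cutEdges (G : Multigraph V E) (X : Set V) : Set E :=
  {e | (G.src e ∈ X ∧ G.tgt e ∉ X) ∨ (G.src e ∉ X ∧ G.tgt e ∈ X)}

/-- A cubic graph is cyclically `k`-edge-connected if every edge cut separating two
cycle-containing parts has at least `k` edges. -/
def CyclicallyEdgeConnected (G : Multigraph V E) (k : ℕ) : Prop :=
  ∀ X : Set V, G.HasCycleIn X → G.HasCycleIn Xᶜ → k ≤ (G.cutEdges X).ncard

/-- `G` is 3-connected: more than 3 vertices, connected, and still connected after
deleting any two vertices. -/
def ThreeConnected [Fintype V] (G : Multigraph V E) : Prop :=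
  3 < Fintype.card V ∧ G.Connected ∧
    ∀ u v : V, G.ConnectedOn {w : V | w ≠ u ∧ w ≠ v} fun _ => True

/-- The graph `G − r` obtained by deleting the vertex `r` and all incident edges. -/
def deleteVertex (G : Multigraph V E) (r : V) :
    Multigraph {v : V // v ≠ r} {e : E // G.src e ≠ r ∧ G.tgt e ≠ r} where
  src e := ⟨G.src e.1, e.2.1⟩
  tgt e := ⟨G.tgt e.1, e.2.2⟩

end Multigraph

/-!
Call the edge set of a circuit through `v` that starts with `e₁` and ends with `e₂` admissible.
An admissible set exists, since a vertex of degree 3 cannot separate a 2-edge-connected graph.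
Among the admissible sets `C` choose one for which the component `A` of `v` in `G − C` is
maximal, and suppose that `A` misses a vertex. Then it misses a vertex of the circuit. Take a
maximal segment of the circuit outside `A`, and let `X` be the union of the components of `G − C`
that meet it. All edges leaving `X` lie on the circuit and only two of them lead to the ends of
the segment, so by 3-edge-connectivity some component of `G − C` meets the circuit both inside and
outside the segment. Rerouting the circuit through that component bypasses a vertex of `A`; the
bypassed edges then join a new vertex to `A`, contradicting maximality.
-/

namespace Multigraph

variable {V E : Type} {G : Multigraph V E} {P Q : E → Prop} {C F : Set E} {X : Set V}
  {e e₁ e₂ : E} {a b u v w x y : V} {k : ℕ}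

/-- Incidence of an edge with a vertex. -/
def Incident (G : Multigraph V E) (e : E) (v : V) : Prop :=
  G.src e = v ∨ G.tgt e = v

/-- The undirected relation that the edge `e` has the two ends `x` and `y`; `G.Link e x x` says
that `e` is a loop at `x`. -/
def Link (G : Multigraph V E) (e : E) (x y : V) : Prop :=
  (G.src e = x ∧ G.tgt e = y) ∨ (G.src e = y ∧ G.tgt e = x)

theorem Link.symm (h : G.Link e x y) : G.Link e y x :=
  Or.symm h

theorem Link.incident_iff (h : G.Link e x y) : G.Incident e u ↔ u = x ∨ u = y := by
  unfold Link Incident at *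
  grind

theorem Link.eq_and_eq_or (h : G.Link e x y) (h' : G.Link e u w) :
    (x = u ∧ y = w) ∨ (x = w ∧ y = u) := by
  unfold Link at *
  grind

theorem Incident.exists_link (h : G.Incident e x) : ∃ y, G.Link e x y :=
  h.elim (fun h => ⟨_, Or.inl ⟨h, rfl⟩⟩) fun h => ⟨_, Or.inr ⟨rfl, h⟩⟩

theorem mem_cutEdges : e ∈ G.cutEdges X ↔ ∃ u ∈ X, ∃ w ∉ X, G.Link e u w := by
  unfold Link cutEdges
  grind

theorem mem_cutEdges_singleton : e ∈ G.cutEdges {v} ↔ G.Incident e v ∧ ¬ G.Link e v v := by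
  unfold Link Incident cutEdges
  grind

/-! ### Reachability and edge cuts -/

theorem Reaches.refl (x : V) : G.Reaches P x x :=
  Relation.ReflTransGen.refl

theorem Reaches.trans (h : G.Reaches P x y) (h' : G.Reaches P y u) : G.Reaches P x u :=
  Relation.ReflTransGen.trans h h'

theorem Reaches.symm (h : G.Reaches P x y) : G.Reaches P y x :=
  have : Std.Symm (G.adjVia P) := ⟨fun _ _ ⟨e, he, hl⟩ => ⟨e, he, hl.symm⟩⟩
  symm_of (Relation.ReflTransGen (G.adjVia P)) h

theorem Reaches.mono (hPQ : ∀ e, P e → Q e) (h : G.Reaches P x y) : G.Reaches Q x y :=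
  Relation.ReflTransGen.mono (fun _ _ ⟨e, he, hl⟩ => ⟨e, hPQ e he, hl⟩) _ _ h

theorem Link.reaches (h : G.Link e x y) (he : P e) : G.Reaches P x y :=
  Relation.ReflTransGen.single ⟨e, he, h⟩

/-- The vertex set of the connected component of `v` in the spanning subgraph of `G` whose edges
are those satisfying `P`. -/
def component (G : Multigraph V E) (P : E → Prop) (v : V) : Set V :=
  {x | G.Reaches P v x}

theorem Reaches.within_component (h : G.Reaches P x y) :
    G.Reaches (fun e => P e ∧ G.src e ∈ G.component P x ∧ G.tgt e ∈ G.component P x) x y := by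
  induction h with
  | refl => exact Reaches.refl x
  | @tail u w hu huw ih =>
    obtain ⟨e, he, hl⟩ := huw
    have hw : G.Reaches P x w := Reaches.trans hu (Link.reaches hl he)
    refine ih.trans (Link.reaches hl ⟨he, ?_⟩)
    rcases hl with ⟨rfl, rfl⟩ | ⟨rfl, rfl⟩
    · exact ⟨hu, hw⟩
    · exact ⟨hw, hu⟩

theorem Reaches.exists_mem_cutEdges (h : G.Reaches P x y) (hx : x ∈ X) (hy : y ∉ X) :
    ∃ e ∈ G.cutEdges X, P e := by
  induction h with
  | refl => exact absurd hx hy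
  | @tail u w _ huw ih =>
    by_cases hu : u ∈ X
    · obtain ⟨e, he, hl⟩ := huw
      exact ⟨e, mem_cutEdges.2 ⟨u, hu, w, hy, hl⟩, he⟩
    · exact ih hu

theorem not_of_mem_cutEdges_component (he : e ∈ G.cutEdges (G.component P x)) : ¬ P e := by
  obtain ⟨u, hu, w, hw, hl⟩ := mem_cutEdges.1 he
  exact fun hP => hw (Reaches.trans hu (hl.reaches hP))

theorem notMem_component_of_not_incident (hP : ∀ e, P e → ¬ G.Incident e v) (hx : x ≠ v) :
    v ∉ G.component P x := by
  intro hv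
  obtain ⟨e, he, hPe⟩ := Reaches.exists_mem_cutEdges (Reaches.symm hv) (X := {v}) rfl hx
  exact hP e hPe (mem_cutEdges_singleton.1 he).1

theorem EdgeConnected.exists_mem_cutEdges_notMem (hG : G.EdgeConnected k) (hx : x ∈ X)
    (hy : y ∉ X) (hF : F.ncard < k) : ∃ e ∈ G.cutEdges X, e ∉ F :=
  ((hG F hF).2 x y).exists_mem_cutEdges hx hy

theorem EdgeConnected.le_ncard_cutEdges (hG : G.EdgeConnected k) (hx : x ∈ X) (hy : y ∉ X) :
    k ≤ (G.cutEdges X).ncard := by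
  by_contra! hlt
  obtain ⟨e, he, he'⟩ := hG.exists_mem_cutEdges_notMem hx hy hlt
  exact he' he

theorem EdgeConnected.mono {l : ℕ} (hkl : k ≤ l) (hG : G.EdgeConnected l) : G.EdgeConnected k :=
  fun F hF => hG F (hF.trans_le hkl)

/-! ### Degree counts -/

theorem ncard_src_mem_add_ncard_tgt_mem (hC : C.Finite) (X : Set V) :
    {e ∈ C | G.src e ∈ X}.ncard + {e ∈ C | G.tgt e ∈ X}.ncard =
      (C ∩ G.cutEdges X).ncard + 2 * {e ∈ C | G.src e ∈ X ∧ G.tgt e ∈ X}.ncard := by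
  have hsub (p : E → Prop) : {e ∈ C | p e}.Finite := hC.subset (Set.sep_subset C p)
  have hunion : {e ∈ C | G.src e ∈ X} ∪ {e ∈ C | G.tgt e ∈ X} =
      (C ∩ G.cutEdges X) ∪ {e ∈ C | G.src e ∈ X ∧ G.tgt e ∈ X} := by
    ext e
    simp only [cutEdges, Set.mem_union, Set.mem_inter_iff, Set.mem_ofPred_eq]
    tauto
  have hinter : {e ∈ C | G.src e ∈ X} ∩ {e ∈ C | G.tgt e ∈ X} =
      {e ∈ C | G.src e ∈ X ∧ G.tgt e ∈ X} := by
    ext e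
    simp only [Set.mem_inter_iff, Set.mem_ofPred_eq]
    tauto
  have hdisj : Disjoint (C ∩ G.cutEdges X) {e ∈ C | G.src e ∈ X ∧ G.tgt e ∈ X} := by
    rw [Set.disjoint_left]
    rintro e ⟨-, he⟩ ⟨-, hs, ht⟩
    exact he.elim (fun h => h.2 ht) fun h => h.1 hs
  have hcount := Set.ncard_union_add_ncard_inter _ _ (hsub (G.src · ∈ X)) (hsub (G.tgt · ∈ X))
  rw [hunion, hinter, Set.ncard_union_eq hdisj (hC.inter_of_left _) (hsub _)] at hcount
  omega

theorem ncard_src_add_ncard_tgt (hC : C.Finite) (v : V) :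
    {e ∈ C | G.src e = v}.ncard + {e ∈ C | G.tgt e = v}.ncard =
      (C ∩ G.cutEdges {v}).ncard + 2 * {e ∈ C | G.Link e v v}.ncard := by
  simpa [Link] using ncard_src_mem_add_ncard_tgt_mem (G := G) hC {v}

theorem degree_eq [Finite E] (G : Multigraph V E) (v : V) :
    G.degree v = (G.cutEdges {v}).ncard + 2 * {e | G.Link e v v}.ncard := by
  simpa [degree] using ncard_src_add_ncard_tgt (G := G) Set.finite_univ v

theorem EdgeConnected.not_link_self [Finite E] (hG : G.EdgeConnected k)
    (hv : G.degree v < k + 2) (hu : u ≠ v) : ¬ G.Link e v v := by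
  intro he
  have hcut : k ≤ (G.cutEdges {v}).ncard := hG.le_ncard_cutEdges rfl hu
  have hloop : 0 < {e | G.Link e v v}.ncard := (Set.ncard_pos).2 ⟨e, he⟩
  have := G.degree_eq v
  omega

/-- If `x` and `y` were separated by `v`, the edges at `v` would contain the two disjoint cuts
around the component of `x` in `G − v`, without and with `v`. -/
theorem EdgeConnected.reaches_avoiding [Finite E] (hG : G.EdgeConnected k)
    (hv : (G.cutEdges {v}).ncard < 2 * k) (hx : x ≠ v) (hy : y ≠ v) :
    G.Reaches (fun e => ¬ G.Incident e v) x y := by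
  by_contra hxy
  set X := G.component (fun e => ¬ G.Incident e v) x
  have hvX : v ∉ X := notMem_component_of_not_incident (fun _ => id) hx
  have hX : k ≤ (G.cutEdges X).ncard := hG.le_ncard_cutEdges (Reaches.refl x) hxy
  have hXv : k ≤ (G.cutEdges (insert v X)).ncard :=
    hG.le_ncard_cutEdges (Set.mem_insert v X) (not_or.2 ⟨hy, hxy⟩)
  have hinc (e : E) (he : e ∈ G.cutEdges X) : G.Incident e v :=
    not_not.1 (not_of_mem_cutEdges_component (P := fun e => ¬ G.Incident e v) he)
  have hdisj : Disjoint (G.cutEdges X) (G.cutEdges (insert v X)) := by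
    rw [Set.disjoint_left]
    intro e he
    have := hinc e he
    unfold cutEdges Incident at *
    grind
  have hsub : G.cutEdges X ∪ G.cutEdges (insert v X) ⊆ G.cutEdges {v} := by
    intro e he
    have := hinc e
    unfold cutEdges Incident at *
    grind
  have := Set.ncard_le_ncard hsub
  rw [Set.ncard_union_eq hdisj] at this
  omega

/-! ### Paths and circuits -/

/-- A path with distinct vertices `p 0, …, p n` and edges `c 0, …, c (n - 1)`. The sequences are
indexed by `ℕ`, unlike those of `IsPath`, so that indices can be shifted freely; values beyond the
end are irrelevant. -/
structure IsPathSeq (G : Multigraph V E) (p : ℕ → V) (c : ℕ → E) (n : ℕ) : Prop where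
  injOn : Set.InjOn p (Set.Iic n)
  link : ∀ t < n, G.Link (c t) (p t) (p (t + 1))

/-- A closed walk `p 0, …, p n, p (n + 1) = p 0` with distinct vertices `p 0, …, p n` and distinct
edges `c 0, …, c n`. Its length is `n + 1`, and `0 < n` excludes loops. -/
structure IsCircuit (G : Multigraph V E) (p : ℕ → V) (c : ℕ → E) (n : ℕ) : Prop where
  pos : 0 < n
  closed : p (n + 1) = p 0
  injOn : Set.InjOn p (Set.Iic n)
  edge_injOn : Set.InjOn c (Set.Iic n)
  link : ∀ t ≤ n, G.Link (c t) (p t) (p (t + 1))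

variable {p : ℕ → V} {c : ℕ → E} {n : ℕ}

namespace IsPathSeq

theorem mono {m : ℕ} (h : G.IsPathSeq p c n) (hmn : m ≤ n) : G.IsPathSeq p c m :=
  ⟨h.injOn.mono (Set.Iic_subset_Iic.2 hmn), fun t ht => h.link t (ht.trans_le hmn)⟩

theorem snoc (h : G.IsPathSeq p c n) (he : G.Link e (p n) x) (hx : ∀ t ≤ n, p t ≠ x) :
    G.IsPathSeq (Function.update p (n + 1) x) (Function.update c n e) (n + 1) := by
  have hinj := h.injOn
  refine ⟨fun s hs t ht hst => ?_, fun t ht => ?_⟩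
  · simp only [Set.InjOn, Set.mem_Iic, Function.update_apply] at *
    grind
  · rcases Nat.lt_succ_iff_lt_or_eq.1 ht with htn | rfl
    · simpa [Function.update_apply, htn.ne, (htn.trans n.lt_succ_self).ne] using h.link t htn
    · simpa using he

theorem edge_injOn (h : G.IsPathSeq p c n) : Set.InjOn c (Set.Iio n) := by
  intro s hs t ht hst
  simp only [Set.mem_Iio] at hs ht
  rcases (hst ▸ h.link s hs).eq_and_eq_or (h.link t ht) with ⟨hp, -⟩ | ⟨hp, hp'⟩
  · exact h.injOn hs.le ht.le hp
  · have h₁ : s = t + 1 := h.injOn hs.le ht hp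
    have h₂ : s + 1 = t := h.injOn hs ht.le hp'
    omega

theorem isCircuit (h : G.IsPathSeq p c n) (hn : 0 < n) (he : G.Link e (p n) (p 0))
    (hec : ∀ t < n, c t ≠ e) :
    G.IsCircuit (Function.update p (n + 1) (p 0)) (Function.update c n e) n := by
  have hp (t : ℕ) (ht : t ≤ n) : Function.update p (n + 1) (p 0) t = p t :=
    Function.update_of_ne (by omega) _ _
  have hc (t : ℕ) (ht : t < n) : Function.update c n e t = c t :=
    Function.update_of_ne ht.ne _ _
  refine ⟨hn, by simp, fun s hs t ht hst => ?_, fun s hs t ht hst => ?_, fun t ht => ?_⟩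
  · rw [hp s hs, hp t ht] at hst
    exact h.injOn hs ht hst
  · rcases Nat.lt_or_eq_of_le hs with hs | rfl <;> rcases Nat.lt_or_eq_of_le ht with ht | rfl
    · rw [hc s hs, hc t ht] at hst
      exact h.edge_injOn hs ht hst
    · exact absurd (by simpa [hc s hs] using hst) (hec s hs)
    · exact absurd (by simpa [hc t ht] using hst.symm) (hec t ht)
    · rfl
  · rcases Nat.lt_or_eq_of_le ht with ht | rfl
    · rw [hc t ht, hp t ht.le, hp (t + 1) ht]
      exact h.link t ht
    · simpa using he

end IsPathSeq

theorem Reaches.exists_isPathSeq [Nonempty E] (h : G.Reaches P x y) :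
    ∃ p c n, G.IsPathSeq p c n ∧ p 0 = x ∧ p n = y ∧ ∀ t < n, P (c t) := by
  induction h with
  | refl =>
    exact ⟨fun _ => x, fun _ => Classical.arbitrary E, 0, ⟨by simp [Set.InjOn], by simp⟩, rfl, rfl,
      by simp⟩
  | @tail u w _ huw ih =>
    obtain ⟨p, c, n, hpc, h0, rfl, hP⟩ := ih
    obtain ⟨e, he, hl⟩ := huw
    by_cases hw : ∃ k ≤ n, p k = w
    · obtain ⟨k, hk, hkw⟩ := hw
      exact ⟨p, c, k, hpc.mono hk, h0, hkw, fun t ht => hP t (ht.trans_le hk)⟩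
    · push Not at hw
      refine ⟨_, _, n + 1, hpc.snoc hl hw, by simpa using h0, by simp, fun t ht => ?_⟩
      rcases Nat.lt_succ_iff_lt_or_eq.1 ht with htn | rfl
      · simpa [Function.update_of_ne htn.ne] using hP t htn
      · simpa using he

namespace IsCircuit

theorem reaches_segment (h : G.IsCircuit p c n) {l m : ℕ} (hlm : l ≤ m) (hm : m ≤ n + 1)
    (hP : ∀ t, l ≤ t → t < m → P (c t)) : G.Reaches P (p l) (p m) := by
  induction m, hlm using Nat.le_induction with
  | base => exact Reaches.refl _
  | succ m hlm ih =>
    exact (ih (by omega) fun t hlt htm => hP t hlt (by omega)).trans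
      (Link.reaches (h.link m (by omega)) (hP m hlm (by omega)))

theorem exists_eq_of_incident (h : G.IsCircuit p c n) {t : ℕ} (ht : t ≤ n)
    (hx : G.Incident (c t) x) : ∃ s ≤ n, p s = x := by
  rcases (h.link t ht).incident_iff.1 hx with rfl | rfl
  · exact ⟨t, ht, rfl⟩
  · rcases Nat.lt_or_eq_of_le ht with ht | rfl
    · exact ⟨t + 1, ht, rfl⟩
    · exact ⟨0, Nat.zero_le t, h.closed.symm⟩

theorem exists_pred (h : G.IsCircuit p c n) {t : ℕ} (ht : t ≤ n) :
    ∃ s ≤ n, s ≠ t ∧ ∀ r ≤ n, p (r + 1) = p t ↔ r = s := by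
  have hpos := h.pos
  have hclosed := h.closed
  have hinj {r s : ℕ} (hr : r ≤ n) (hs : s ≤ n) : p r = p s ↔ r = s := h.injOn.eq_iff hr hs
  rcases Nat.eq_zero_or_pos t with rfl | htpos
  · refine ⟨n, le_rfl, hpos.ne', fun r hr => ?_⟩
    rcases Nat.lt_or_eq_of_le hr with hr | rfl
    · rw [hinj hr ht]
      omega
    · simp [hclosed]
  · refine ⟨t - 1, by omega, by omega, fun r hr => ?_⟩
    rcases Nat.lt_or_eq_of_le hr with hr | rfl
    · rw [hinj hr ht]
      omega
    · rw [hclosed, hinj (Nat.zero_le r) ht]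
      omega

theorem not_link_self (h : G.IsCircuit p c n) {t : ℕ} (ht : t ≤ n) : ¬ G.Link (c t) x x := by
  intro hx
  obtain ⟨s, -, hst, hs⟩ := h.exists_pred ht
  have heq : p (t + 1) = p t := by
    rcases (h.link t ht).eq_and_eq_or hx with ⟨h₁, h₂⟩ | ⟨h₁, h₂⟩ <;> rw [h₁, h₂]
  exact hst ((hs t ht).1 heq).symm

theorem exists_inter_cutEdges_eq_pair (h : G.IsCircuit p c n) {t : ℕ} (ht : t ≤ n) :
    ∃ s ≤ n, s ≠ t ∧ c '' Set.Iic n ∩ G.cutEdges {p t} = {c t, c s} := by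
  obtain ⟨s, hs, hst, hpred⟩ := h.exists_pred ht
  have hinc {r : ℕ} (hr : r ≤ n) : G.Incident (c r) (p t) ↔ r = t ∨ r = s := by
    rw [(h.link r hr).incident_iff, ← hpred r hr, eq_comm, h.injOn.eq_iff hr ht, eq_comm (a := p t)]
  refine ⟨s, hs, hst, Set.ext fun e => ⟨?_, ?_⟩⟩
  · rintro ⟨⟨r, hr, rfl⟩, he⟩
    rcases (hinc hr).1 (mem_cutEdges_singleton.1 he).1 with rfl | rfl <;> simp
  · rintro (rfl | rfl)
    · exact ⟨⟨t, ht, rfl⟩, mem_cutEdges_singleton.2 ⟨(hinc ht).2 (.inl rfl), h.not_link_self ht⟩⟩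
    · exact ⟨⟨s, hs, rfl⟩, mem_cutEdges_singleton.2 ⟨(hinc hs).2 (.inr rfl), h.not_link_self hs⟩⟩

theorem isCycle (h : G.IsCircuit p c n) : G.IsCycle (c '' Set.Iic n) := by
  refine ⟨⟨c 0, 0, Nat.zero_le n, rfl⟩, ?_, ?_⟩
  · rintro x ⟨_, ⟨r, hr, rfl⟩, hx⟩
    obtain ⟨t, ht, rfl⟩ := h.exists_eq_of_incident hr hx
    obtain ⟨s, hs, hst, hpair⟩ := h.exists_inter_cutEdges_eq_pair ht
    have hloop : {e ∈ c '' Set.Iic n | G.Link e (p t) (p t)} = ∅ :=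
      Set.eq_empty_of_forall_notMem <| by
        rintro _ ⟨⟨r, hr, rfl⟩, he⟩
        exact h.not_link_self hr he
    rw [ncard_src_add_ncard_tgt ((Set.finite_Iic n).image c), hpair, hloop, Set.ncard_empty,
      Set.ncard_pair fun heq => hst (h.edge_injOn ht hs heq).symm]
  · suffices hreach : ∀ x, G.touches (c '' Set.Iic n) x →
        G.Reaches (· ∈ c '' Set.Iic n) (p 0) x from
      fun x y hx hy => (hreach x hx).symm.trans (hreach y hy)
    rintro x ⟨_, ⟨r, hr, rfl⟩, hx⟩
    obtain ⟨t, ht, rfl⟩ := h.exists_eq_of_incident hr hx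
    exact h.reaches_segment (Nat.zero_le t) (by omega) fun s _ hs => ⟨s, (hs.trans_le ht).le, rfl⟩

end IsCircuit

/-- `C` is the edge set of a circuit through `v` that starts with the edge `e₁` and ends with the
edge `e₂`. -/
def IsCircuitAt (G : Multigraph V E) (v : V) (e₁ e₂ : E) (C : Set E) : Prop :=
  ∃ p c n, G.IsCircuit p c n ∧ p 0 = v ∧ c 0 = e₁ ∧ c n = e₂ ∧ c '' Set.Iic n = C

namespace IsCircuitAt

theorem isCycle (h : G.IsCircuitAt v e₁ e₂ C) : G.IsCycle C := by
  obtain ⟨p, c, n, hpc, -, -, -, rfl⟩ := h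
  exact hpc.isCycle

theorem left_mem (h : G.IsCircuitAt v e₁ e₂ C) : e₁ ∈ C := by
  obtain ⟨p, c, n, -, -, rfl, -, rfl⟩ := h
  exact ⟨0, Nat.zero_le n, rfl⟩

theorem right_mem (h : G.IsCircuitAt v e₁ e₂ C) : e₂ ∈ C := by
  obtain ⟨p, c, n, -, -, -, rfl, rfl⟩ := h
  exact ⟨n, Set.self_mem_Iic, rfl⟩

end IsCircuitAt

theorem Reaches.exists_isCircuitAt (hne : e₁ ≠ e₂) (h₁ : G.Link e₁ v a) (h₂ : G.Link e₂ v b)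
    (hb : b ≠ v) (h : G.Reaches (fun e => P e ∧ ¬ G.Incident e v) a b) :
    ∃ C, G.IsCircuitAt v e₁ e₂ C ∧ ∀ e ∈ C, e = e₁ ∨ e = e₂ ∨ P e := by
  have hvb : G.Reaches (fun e => e = e₁ ∨ P e ∧ ¬ G.Incident e v) v b :=
    (h₁.reaches (.inl rfl)).trans (h.mono fun _ => .inr)
  have : Nonempty E := ⟨e₁⟩
  obtain ⟨p, c, n, hpc, rfl, rfl, hc⟩ := hvb.exists_isPathSeq
  have hn : 0 < n := Nat.pos_of_ne_zero fun hn => hb (congrArg p hn)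
  have hc0 : c 0 = e₁ :=
    (hc 0 hn).resolve_right fun h => h.2 ((hpc.link 0 hn).incident_iff.2 (.inl rfl))
  have hc₂ (t : ℕ) (ht : t < n) : c t ≠ e₂ := fun heq =>
    (hc t ht).elim (fun h => hne (h.symm.trans heq)) fun h =>
      h.2 (heq ▸ h₂.incident_iff.2 (.inl rfl))
  refine ⟨_, ⟨_, _, n, hpc.isCircuit hn h₂.symm hc₂, ?_, ?_, by simp, rfl⟩, ?_⟩
  · exact Function.update_of_ne (by omega) _ _
  · rw [Function.update_of_ne hn.ne, hc0]
  · rintro _ ⟨t, ht, rfl⟩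
    rcases Nat.lt_or_eq_of_le ht with ht | rfl
    · rw [Function.update_of_ne ht.ne]
      exact (hc t ht).imp_right fun h => .inr h.1
    · simp

/-! ### Rerouting a circuit -/

theorem exists_maximal_gap {Q : ℕ → Prop} {s N : ℕ} (h0 : Q 0) (hN : Q N) (hs : ¬ Q s)
    (hsN : s ≤ N) :
    ∃ i j, i < s ∧ s < j ∧ j ≤ N ∧ Q i ∧ Q j ∧ ∀ t ∈ Set.Ioo i j, ¬ Q t := by
  have hex : ∃ j, s ≤ j ∧ Q j := ⟨N, hsN, hN⟩
  have hj := Nat.find_spec hex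
  have hi : Q (Nat.findGreatest Q s) := Nat.findGreatest_spec (Nat.zero_le s) h0
  have ne_of_Q {t : ℕ} (ht : Q t) : t ≠ s := fun heq => hs (heq ▸ ht)
  refine ⟨Nat.findGreatest Q s, Nat.find hex, (Nat.findGreatest_le s).lt_of_ne (ne_of_Q hi),
    hj.1.lt_of_ne' (ne_of_Q hj.2), Nat.find_min' hex ⟨hsN, hN⟩, hi, hj.2, fun t ht hQ => ?_⟩
  rcases Nat.le_total t s with hts | hst
  · exact Nat.findGreatest_is_greatest ht.1 hts hQ
  · exact Nat.find_min hex ht.2 ⟨hst, hQ⟩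

namespace IsCircuit

theorem exists_not_reaches (h : G.IsCircuit p c n) (hG : G.Connected)
    (hw : ¬ G.Reaches (· ∉ c '' Set.Iic n) v w) :
    ∃ s ≤ n, ¬ G.Reaches (· ∉ c '' Set.Iic n) v (p s) := by
  obtain ⟨e, he, -⟩ := (hG.2 v w).exists_mem_cutEdges
    (X := G.component (· ∉ c '' Set.Iic n) v) (Reaches.refl v) hw
  obtain ⟨t, ht, rfl⟩ := not_not.1 (not_of_mem_cutEdges_component (P := (· ∉ c '' Set.Iic n)) he)
  obtain ⟨u, -, y, hy, hl⟩ := mem_cutEdges.1 he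
  obtain ⟨s, hs, rfl⟩ := h.exists_eq_of_incident ht (hl.incident_iff.2 (.inr rfl))
  exact ⟨s, hs, hy⟩

theorem exists_reaches_notMem_Ioo (h : G.IsCircuit p c n) (hG : G.EdgeConnected 3) {i j s : ℕ}
    (hs : s ∈ Set.Ioo i j)
    (hy : ∀ t ∈ Set.Ioo i j, ¬ G.Reaches (· ∉ c '' Set.Iic n) (p t) y) :
    ∃ m ∈ Set.Ioo i j, ∃ l ≤ n + 1, l ∉ Set.Ioo i j ∧
      G.Reaches (· ∉ c '' Set.Iic n) (p m) (p l) := by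
  let X : Set V := {x | ∃ t ∈ Set.Ioo i j, G.Reaches (· ∉ c '' Set.Iic n) (p t) x}
  have hpX {t : ℕ} (ht : t ∈ Set.Ioo i j) : p t ∈ X := ⟨t, ht, Reaches.refl _⟩
  have hcard : ({c i, c (j - 1)} : Set E).ncard < 3 := (Set.ncard_insert_le _ _).trans_lt (by simp)
  obtain ⟨e, he, hne⟩ := hG.exists_mem_cutEdges_notMem (X := X) (hpX hs)
    (fun ⟨t, ht, hty⟩ => hy t ht hty) hcard
  obtain ⟨x, hx, w, hw, hl⟩ := mem_cutEdges.1 he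
  have heC : e ∈ c '' Set.Iic n := by
    by_contra heC
    obtain ⟨t, ht, htx⟩ := hx
    exact hw ⟨t, ht, htx.trans (hl.reaches heC)⟩
  obtain ⟨t, ht, rfl⟩ := heC
  have hti : t ≠ i := fun hti => hne (.inl (congrArg c hti))
  have htj : t ≠ j - 1 := fun htj => hne (.inr (congrArg c htj))
  obtain ⟨l, hl, hlX, hlij⟩ : ∃ l ≤ n + 1, p l ∈ X ∧ l ∉ Set.Ioo i j := by
    simp only [Set.mem_Iic, Set.mem_Ioo] at *
    rcases hl.eq_and_eq_or (h.link t ht) with ⟨rfl, rfl⟩ | ⟨rfl, rfl⟩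
    · exact ⟨t, by omega, hx, fun htij => hw (hpX (by omega))⟩
    · exact ⟨t + 1, by omega, hx, fun htij => hw (hpX (by omega))⟩
  obtain ⟨m, hm, hml⟩ := hlX
  exact ⟨m, hm, l, hl, hlij, hml⟩

theorem exists_reroute (h : G.IsCircuit p c n) (hG : G.EdgeConnected 3)
    (hw : ¬ G.Reaches (· ∉ c '' Set.Iic n) (p 0) w) :
    ∃ l r m, l < r ∧ r < m ∧ m ≤ n ∧ G.Reaches (· ∉ c '' Set.Iic n) (p l) (p m) ∧
      ¬ G.Reaches (· ∉ c '' Set.Iic n) (p 0) (p l) ∧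
      G.Reaches (· ∉ c '' Set.Iic n) (p 0) (p r) := by
  let Q (t : ℕ) : Prop := G.Reaches (· ∉ c '' Set.Iic n) (p 0) (p t)
  have hconn : G.Connected := by simpa [Connected] using hG ∅ (by simp)
  obtain ⟨s, hs, hQs⟩ := h.exists_not_reaches hconn hw
  have hQend : Q (n + 1) := by simpa only [Q, h.closed] using Reaches.refl (p 0)
  obtain ⟨i, j, his, hsj, hj, hQi, hQj, hgap⟩ :=
    exists_maximal_gap (Q := Q) (Reaches.refl (p 0)) hQend hQs (by omega)
  obtain ⟨m, hm, l, hl, hlij, hml⟩ := h.exists_reaches_notMem_Ioo hG ⟨his, hsj⟩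
    (y := p 0) fun t ht htp => hgap t ht htp.symm
  have hQl : ¬ Q l := fun hQl => hgap m hm (hQl.trans hml.symm)
  have ne_of_Q {t : ℕ} (ht : Q t) : l ≠ t := fun heq => hQl (heq ▸ ht)
  have hli := ne_of_Q hQi
  have hlj := ne_of_Q hQj
  have hlend := ne_of_Q hQend
  simp only [Set.mem_Ioo] at hm hlij
  rcases Nat.lt_or_ge l i with hlt | hge
  · exact ⟨l, i, m, hlt, hm.1, by omega, hml.symm, hQl, hQi⟩
  · exact ⟨m, j, l, hm.2, by omega, by omega, hml, hgap m hm, hQj⟩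

theorem not_incident_base (h : G.IsCircuit p c n) {t : ℕ} (h0 : 0 < t) (ht : t < n) :
    ¬ G.Incident (c t) (p 0) := by
  rw [(h.link t ht.le).incident_iff, h.injOn.eq_iff (Nat.zero_le n) ht.le,
    h.injOn.eq_iff (Nat.zero_le n) ht]
  omega

theorem exists_isCircuitAt_of_reroute (h : G.IsCircuit p c n) {l m : ℕ} (hlm : l ≤ m)
    (hm : m ≤ n) (hreach : G.Reaches (· ∉ c '' Set.Iic n) (p l) (p m))
    (hl : ¬ G.Reaches (· ∉ c '' Set.Iic n) (p 0) (p l)) :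
    ∃ C, G.IsCircuitAt (p 0) (c 0) (c n) C ∧ ∀ e ∈ C, (∃ t ≤ n, (t < l ∨ m ≤ t) ∧ c t = e) ∨
      e ∉ c '' Set.Iic n ∧ G.src e ∉ G.component (· ∉ c '' Set.Iic n) (p 0) := by
  have hl0 : 0 < l := Nat.pos_of_ne_zero fun h0 => hl (by rw [h0]; exact Reaches.refl _)
  let P (e : E) : Prop := (∃ t ≤ n, (t < l ∨ m ≤ t) ∧ c t = e) ∨
    e ∉ c '' Set.Iic n ∧ G.src e ∉ G.component (· ∉ c '' Set.Iic n) (p 0)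
  have hbefore : G.Reaches (fun e => P e ∧ ¬ G.Incident e (p 0)) (p 1) (p l) :=
    h.reaches_segment hl0 (by omega) fun t h1t htl =>
      ⟨.inl ⟨t, by omega, .inl htl, rfl⟩, h.not_incident_base h1t (by omega)⟩
  have hdetour : G.Reaches (fun e => P e ∧ ¬ G.Incident e (p 0)) (p l) (p m) := by
    refine hreach.within_component.mono fun e ⟨heC, hsrc, htgt⟩ =>
      ⟨.inr ⟨heC, fun hA => hl (Reaches.trans hA (Reaches.symm hsrc))⟩, ?_⟩
    rintro (heq | heq)
    · exact hl (Reaches.symm (heq ▸ hsrc))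
    · exact hl (Reaches.symm (heq ▸ htgt))
  have hafter : G.Reaches (fun e => P e ∧ ¬ G.Incident e (p 0)) (p m) (p n) :=
    h.reaches_segment hm (by omega) fun t hmt htn =>
      ⟨.inl ⟨t, htn.le, .inr hmt, rfl⟩, h.not_incident_base (by omega) htn⟩
  have hne : c 0 ≠ c n := fun heq => h.pos.ne (h.edge_injOn (Nat.zero_le n) Set.self_mem_Iic heq)
  have hlast : G.Link (c n) (p 0) (p n) := (h.closed ▸ h.link n le_rfl).symm
  have hbase : p n ≠ p 0 := fun heq =>
    h.pos.ne' (h.injOn Set.self_mem_Iic (Nat.zero_le n) heq)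
  obtain ⟨C, hC, hCP⟩ := ((hbefore.trans hdetour).trans hafter).exists_isCircuitAt hne
    (h.link 0 (Nat.zero_le n)) hlast hbase
  refine ⟨C, hC, fun e he => ?_⟩
  rcases hCP e he with rfl | rfl | hP
  · exact .inl ⟨0, Nat.zero_le n, .inl hl0, rfl⟩
  · exact .inl ⟨n, le_rfl, .inr hm, rfl⟩
  · exact hP

end IsCircuit

theorem IsCircuitAt.exists_component_ssubset (hC : G.IsCircuitAt v e₁ e₂ C)
    (hG : G.EdgeConnected 3) (hw : w ∉ G.component (· ∉ C) v) :
    ∃ C', G.IsCircuitAt v e₁ e₂ C' ∧ G.component (· ∉ C) v ⊂ G.component (· ∉ C') v := by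
  obtain ⟨p, c, n, h, rfl, rfl, rfl, rfl⟩ := hC
  obtain ⟨l, r, m, hlr, hrm, hm, hlm, hl, hr⟩ := h.exists_reroute hG hw
  obtain ⟨C', hC', hCC'⟩ := h.exists_isCircuitAt_of_reroute (hlr.trans hrm).le hm hlm hl
  have hkeep : G.component (· ∉ c '' Set.Iic n) (p 0) ⊆ G.component (· ∉ C') (p 0) := fun x hx =>
    (Reaches.within_component hx).mono fun e ⟨heC, hsrc, _⟩ heC' =>
      (hCC' e heC').elim (fun ⟨t, ht, _, hte⟩ => heC ⟨t, ht, hte⟩) fun hdetour => hdetour.2 hsrc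
  have hbypass : G.Reaches (· ∉ C') (p l) (p r) := by
    refine h.reaches_segment hlr.le (by omega) fun t hlt htr htC' => ?_
    rcases hCC' _ htC' with ⟨s, hs, hslm, hst⟩ | ⟨htC, -⟩
    · have : s = t := h.edge_injOn hs (show t ≤ n by omega) hst
      omega
    · exact htC ⟨t, show t ≤ n by omega, rfl⟩
  exact ⟨C', hC', hkeep, fun hsub => hl (hsub (Reaches.trans (hkeep hr) hbypass.symm))⟩

theorem IsCircuitAt.exists_peripheral [Finite V] (hC : G.IsCircuitAt v e₁ e₂ C)
    (hG : G.EdgeConnected 3) : ∃ C', G.IsCircuitAt v e₁ e₂ C' ∧ G.Peripheral C' := by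
  obtain ⟨C', hC', hmax⟩ := exists_maximalFor_of_wellFoundedGT (G.IsCircuitAt v e₁ e₂)
    (fun C => G.component (· ∉ C) v) ⟨C, hC⟩
  have hall (w : V) : G.Reaches (· ∉ C') v w := by
    by_contra hw
    obtain ⟨C'', hC'', hlt⟩ := hC'.exists_component_ssubset hG hw
    exact hlt.2 (hmax hC'' hlt.1)
  exact ⟨C', hC', ⟨v⟩, fun x y => (hall x).symm.trans (hall y)⟩

/-! ### Cycles through two edges at a vertex -/

theorem IsCycle.even_ncard_inter_cutEdges [Finite V] [Finite E] (hC : G.IsCycle C) (X : Set V) :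
    Even (C ∩ G.cutEdges X).ncard := by
  suffices h : Even ({e ∈ C | G.src e ∈ X}.ncard + {e ∈ C | G.tgt e ∈ X}.ncard) by
    rw [ncard_src_mem_add_ncard_tgt_mem (Set.toFinite C)] at h
    exact (Nat.even_add.1 h).2 (even_two_mul _)
  have hdeg (x : V) : Even ({e ∈ C | G.src e = x}.ncard + {e ∈ C | G.tgt e = x}.ncard) := by
    by_cases hx : G.touches C x
    · simp [hC.2.1 x hx]
    · have hsrc : {e ∈ C | G.src e = x} = ∅ :=
        Set.eq_empty_of_forall_notMem fun e he => hx ⟨e, he.1, .inl he.2⟩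
      have htgt : {e ∈ C | G.tgt e = x} = ∅ :=
        Set.eq_empty_of_forall_notMem fun e he => hx ⟨e, he.1, .inr he.2⟩
      simp [hsrc, htgt]
  have hinsert (f : E → V) {x : V} {X : Set V} (hx : x ∉ X) :
      {e ∈ C | f e ∈ insert x X}.ncard = {e ∈ C | f e = x}.ncard + {e ∈ C | f e ∈ X}.ncard := by
    rw [← Set.ncard_union_eq]
    · congr 1
      ext e
      simp only [Set.mem_insert_iff, Set.mem_union, Set.mem_ofPred_eq]
      tauto
    · exact Set.disjoint_left.2 fun e he he' => hx (he.2 ▸ he'.2)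
  induction X, Set.toFinite X using Set.Finite.induction_on with
  | empty => simp
  | @insert x X hx _ ih =>
    rw [hinsert _ hx, hinsert _ hx, add_add_add_comm]
    exact (hdeg x).add ih

theorem IsCycle.inter_cutEdges_singleton_eq_pair [Finite E] (hC : G.IsCycle C) (hne : e₁ ≠ e₂)
    (he₁ : e₁ ∈ C) (he₂ : e₂ ∈ C) (h₁ : G.Incident e₁ v) (h₂ : G.Incident e₂ v) :
    C ∩ G.cutEdges {v} = {e₁, e₂} := by
  have hcount := hC.2.1 v ⟨e₁, he₁, h₁⟩
  rw [ncard_src_add_ncard_tgt (Set.toFinite C)] at hcount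
  have hsub : {e₁, e₂} ⊆ (C ∩ G.cutEdges {v}) ∪ {e ∈ C | G.Link e v v} := by
    rintro e (rfl | rfl)
    · by_cases hl : G.Link e v v
      · exact .inr ⟨he₁, hl⟩
      · exact .inl ⟨he₁, mem_cutEdges_singleton.2 ⟨h₁, hl⟩⟩
    · by_cases hl : G.Link e v v
      · exact .inr ⟨he₂, hl⟩
      · exact .inl ⟨he₂, mem_cutEdges_singleton.2 ⟨h₂, hl⟩⟩
  have hle := (Set.ncard_le_ncard hsub).trans (Set.ncard_union_le _ _)
  rw [Set.ncard_pair hne] at hle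
  have hloop : {e ∈ C | G.Link e v v} = ∅ := (Set.ncard_eq_zero).1 (by omega)
  rw [hloop, Set.union_empty] at hsub
  exact (Set.eq_of_subset_of_ncard_le hsub (by rw [Set.ncard_pair hne]; omega)).symm

theorem IsCycle.reaches_avoiding [Finite V] [Finite E] (hC : G.IsCycle C)
    (hpair : C ∩ G.cutEdges {v} = {e₁, e₂}) (h₁ : G.Link e₁ v a)
    (h₂ : G.Link e₂ v b) : G.Reaches (fun e => e ∈ C ∧ ¬ G.Incident e v) a b := by
  by_contra hb
  set X := G.component (fun e => e ∈ C ∧ ¬ G.Incident e v) a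
  have he₁ : e₁ ∈ C ∩ G.cutEdges {v} := by simp [hpair]
  have hav : a ≠ v := by
    rintro rfl
    exact (mem_cutEdges_singleton.1 he₁.2).2 h₁
  have hvX : v ∉ X := notMem_component_of_not_incident (fun _ => And.right) hav
  have hcut : C ∩ G.cutEdges X = {e₁} := by
    refine Set.Subset.antisymm (fun e ⟨heC, heX⟩ => ?_) (Set.singleton_subset_iff.2
      ⟨he₁.1, mem_cutEdges.2 ⟨a, Reaches.refl a, v, hvX, h₁.symm⟩⟩)
    have hinc : G.Incident e v := by
      by_contra hinc
      exact not_of_mem_cutEdges_component heX ⟨heC, hinc⟩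
    obtain ⟨x, hx, y, hy, hl⟩ := mem_cutEdges.1 heX
    have hloop : ¬ G.Link e v v := fun hl' => by
      rcases hl.eq_and_eq_or hl' with ⟨rfl, -⟩ | ⟨rfl, -⟩ <;> exact hvX hx
    rcases hpair.subset ⟨heC, mem_cutEdges_singleton.2 ⟨hinc, hloop⟩⟩ with rfl | rfl
    · rfl
    · rcases hl.eq_and_eq_or h₂ with ⟨rfl, -⟩ | ⟨rfl, -⟩
      · exact absurd hx hvX
      · exact absurd hx hb
  have heven := hC.even_ncard_inter_cutEdges X
  rw [hcut, Set.ncard_singleton] at heven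
  exact Nat.not_even_one heven

theorem IsCycle.exists_isCircuitAt [Finite V] [Finite E] (hC : G.IsCycle C) (hne : e₁ ≠ e₂)
    (he₁ : e₁ ∈ C) (he₂ : e₂ ∈ C) (h₁ : G.Incident e₁ v) (h₂ : G.Incident e₂ v) :
    ∃ C', G.IsCircuitAt v e₁ e₂ C' := by
  obtain ⟨a, ha⟩ := h₁.exists_link
  obtain ⟨b, hb⟩ := h₂.exists_link
  have hpair := hC.inter_cutEdges_singleton_eq_pair hne he₁ he₂ h₁ h₂
  have hbv : b ≠ v := by
    rintro rfl
    have : e₂ ∈ C ∩ G.cutEdges {b} := by simp [hpair]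
    exact (mem_cutEdges_singleton.1 this.2).2 hb
  obtain ⟨C', hC', -⟩ := (hC.reaches_avoiding hpair ha hb).exists_isCircuitAt hne ha hb hbv
  exact ⟨C', hC'⟩

theorem exists_ne_of_degree_lt_four [Finite E] (hne : e₁ ≠ e₂) (hv : G.degree v < 4) :
    ∃ u, u ≠ v := by
  by_contra! hall
  have hpair (f : E → V) : 2 ≤ {e | f e = v}.ncard :=
    (Set.ncard_pair hne).symm.le.trans (Set.ncard_le_ncard fun e _ => hall (f e))
  have := hpair G.src
  have := hpair G.tgt
  unfold degree at hv
  omega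

theorem EdgeConnected.exists_isCycle [Finite E] (hG : G.EdgeConnected 2) (hv : G.degree v < 4)
    (hne : e₁ ≠ e₂) (h₁ : G.Incident e₁ v) (h₂ : G.Incident e₂ v) :
    ∃ C, G.IsCycle C ∧ e₁ ∈ C ∧ e₂ ∈ C := by
  obtain ⟨a, ha⟩ := h₁.exists_link
  obtain ⟨b, hb⟩ := h₂.exists_link
  obtain ⟨u, hu⟩ := exists_ne_of_degree_lt_four hne hv
  have hav : a ≠ v := by
    rintro rfl
    exact hG.not_link_self hv hu ha
  have hbv : b ≠ v := by
    rintro rfl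
    exact hG.not_link_self hv hu hb
  have hcut : (G.cutEdges {v}).ncard < 2 * 2 :=
    (Nat.le_add_right _ _).trans_lt (G.degree_eq v ▸ hv)
  obtain ⟨C, hC, -⟩ := ((hG.reaches_avoiding hcut hav hbv).mono
    fun _ => And.intro trivial).exists_isCircuitAt hne ha hb hbv
  exact ⟨C, hC.isCycle, hC.left_mem, hC.right_mem⟩

end Multigraph

theorem peripheral_cycle_through_two_edges_general {V E : Type} [Finite V] [Finite E]
    (G : Multigraph V E) (hG : G.EdgeConnected 3) (v : V) (e₁ e₂ : E) (hne : e₁ ≠ e₂)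
    (h₁ : G.src e₁ = v ∨ G.tgt e₁ = v) (h₂ : G.src e₂ = v ∨ G.tgt e₂ = v)
    (hC : ∃ C : Set E, G.IsCycle C ∧ e₁ ∈ C ∧ e₂ ∈ C) :
    ∃ C : Set E, G.IsCycle C ∧ G.Peripheral C ∧ e₁ ∈ C ∧ e₂ ∈ C := by
  obtain ⟨C, hC, he₁, he₂⟩ := hC
  obtain ⟨C₀, hC₀⟩ := hC.exists_isCircuitAt hne he₁ he₂ h₁ h₂
  obtain ⟨C', hC', hper⟩ := hC₀.exists_peripheral hG
  exact ⟨C', hC'.isCycle, hper, hC'.left_mem, hC'.right_mem⟩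

/-- In a 3-edge-connected cubic graph, any two distinct edges incident with a common
vertex lie on a common peripheral cycle. -/
theorem peripheral_cycle_through_two_edges {V E : Type} [Fintype V] [Fintype E]
    (G : Multigraph V E) (hG : G.EdgeConnected 3) (hcubic : G.Cubic)
    (v : V) (e₁ e₂ : E) (hne : e₁ ≠ e₂)
    (h₁ : G.src e₁ = v ∨ G.tgt e₁ = v) (h₂ : G.src e₂ = v ∨ G.tgt e₂ = v) :
    ∃ C : Set E, G.IsCycle C ∧ G.Peripheral C ∧ e₁ ∈ C ∧ e₂ ∈ C :=
  peripheral_cycle_through_two_edges_general G hG v e₁ e₂ hne h₁ h₂ <|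
    (hG.mono (by norm_num)).exists_isCycle (by rw [hcubic v]; norm_num) hne h₁ h₂
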